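/- arXiv:cs/0207064 — 2 statements merged into one kernel-verified Lean document; each statement's English description precedes it below -/
import Mathlib

section
/- (Interpolation for Circumscription 1.) Let T be a set of propositional formulas, P and Q sets of variables, and φ a formula. If Circ[T;P;Q] ⊨ φ, then the set γ := Cn^{L(T) ∩ (L(φ) ∪ P)}(T) satisfies: γ ⊆ 𝓛(T) ∩ 𝓛(L(φ) ∪ P), T ⊨ γ, and Circ[γ;P;Q] ⊨ φ. In particular there exists a set γ of formulas in 𝓛(T) ∩ 𝓛(L(φ) ∪ P) with T ⊨ γ and Circ[γ;P;Q] ⊨ φ. -/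
namespace NMR

/-- Propositional formulas over a variable type `V`. -/
inductive PropForm (V : Type*) : Type _ where
  | var : V → PropForm V
  | tru : PropForm V
  | fls : PropForm V
  | neg : PropForm V → PropForm V
  | conj : PropForm V → PropForm V → PropForm V
  | disj : PropForm V → PropForm V → PropForm V
  | impl : PropForm V → PropForm V → PropForm V

variable {V : Type*}

/-- Truth value of a formula under a valuation. -/
def PropForm.eval (ν : V → Bool) : PropForm V → Bool
  | .var v => ν v
  | .tru => true
  | .fls => false
  | .neg φ => !(φ.eval ν)
  | .conj φ ψ => φ.eval ν && ψ.eval ν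
  | .disj φ ψ => φ.eval ν || ψ.eval ν
  | .impl φ ψ => !(φ.eval ν) || ψ.eval ν

/-- The set of variables occurring in a formula. -/
def PropForm.vars : PropForm V → Set V
  | .var v => {v}
  | .tru => ∅
  | .fls => ∅
  | .neg φ => φ.vars
  | .conj φ ψ => φ.vars ∪ ψ.vars
  | .disj φ ψ => φ.vars ∪ ψ.vars
  | .impl φ ψ => φ.vars ∪ ψ.vars

/-- `ν ⊨ φ`. -/
def Sat (ν : V → Bool) (φ : PropForm V) : Prop := φ.eval ν = true

/-- `ν ⊨ T` for a set of formulas. -/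
def SatSet (ν : V → Bool) (T : Set (PropForm V)) : Prop := ∀ φ ∈ T, Sat ν φ

/-- `T ⊨ φ`. -/
def Entails (T : Set (PropForm V)) (φ : PropForm V) : Prop :=
  ∀ ν : V → Bool, SatSet ν T → Sat ν φ

/-- `T ⊨ Γ` for a set `Γ`. -/
def EntailsSet (T Γ : Set (PropForm V)) : Prop := ∀ φ ∈ Γ, Entails T φ

/-- A tautology is satisfied by every valuation. -/
def Tautology (φ : PropForm V) : Prop := ∀ ν : V → Bool, Sat ν φ

/-- `L(T)`: the set of variables occurring in a set of formulas. -/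
def varsOf (T : Set (PropForm V)) : Set V := ⋃ φ ∈ T, φ.vars

/-- `𝓛(S)`: the set of formulas all of whose variables lie in `S`. -/
def FormsOver (S : Set V) : Set (PropForm V) := {φ | φ.vars ⊆ S}

/-- `Cn^S(T)`: the formulas in `𝓛(S)` entailed by `T`. -/
def Cn (S : Set V) (T : Set (PropForm V)) : Set (PropForm V) :=
  {φ | φ.vars ⊆ S ∧ Entails T φ}

/-- Two sets of formulas are logically equivalent iff they have the same models. -/
def EquivTheories (T T' : Set (PropForm V)) : Prop :=
  ∀ ν : V → Bool, SatSet ν T ↔ SatSet ν T'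

/-- `ν ≤_{P,Q} ν'`. -/
def circLe (P Q : Set V) (ν ν' : V → Bool) : Prop :=
  (∀ x, x ∉ P ∪ Q → ν x = ν' x) ∧
    {x | x ∈ P ∧ ν x = true} ⊆ {x | x ∈ P ∧ ν' x = true}

/-- `ν <_{P,Q} ν'`. -/
def circLt (P Q : Set V) (ν ν' : V → Bool) : Prop :=
  circLe P Q ν ν' ∧ {x | x ∈ P ∧ ν x = true} ⊂ {x | x ∈ P ∧ ν' x = true}

/-- `ν` is a model of `Circ[T;P;Q]`. -/
def CircModel (T : Set (PropForm V)) (P Q : Set V) (ν : V → Bool) : Prop :=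
  SatSet ν T ∧ ¬ ∃ ν' : V → Bool, SatSet ν' T ∧ circLt P Q ν' ν

/-- `Circ[T;P;Q] ⊨ φ`. -/
def CircEntails (T : Set (PropForm V)) (P Q : Set V) (φ : PropForm V) : Prop :=
  ∀ ν : V → Bool, CircModel T P Q ν → Sat ν φ

/-!
By compactness, every model `ν` of `Cn^S(T)` agrees on `S` with some model `μ` of `T`; off `L(T)`
the values of `μ` are free, so for `Cn^{L(T) ∩ S}(T)` the agreement can again be arranged on all of
`S`. Let `S = L(φ) ∪ P` and let `ν` be a model of `Circ[Cn^{L(T) ∩ S}(T);P;Q]`. Then `μ` is minimal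
too: if `μ' ⊨ T` lay strictly below `μ`, the valuation equal to `μ'` on `S` and to `ν` elsewhere
would be a model of `Cn^{L(T) ∩ S}(T)` strictly below `ν`. Hence `μ ⊨ φ`, and `ν ⊨ φ` because
`L(φ) ⊆ S`.
-/

section Semantics

variable {S : Set V} {T : Set (PropForm V)} {μ ν : V → Bool}

lemma sat_var {x : V} : Sat ν (.var x) ↔ ν x = true := Iff.rfl

lemma sat_neg {φ : PropForm V} : Sat ν (.neg φ) ↔ ¬ Sat ν φ := by
  simp only [Sat, PropForm.eval, Bool.not_eq_true', Bool.not_eq_true]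

lemma sat_conj {φ ψ : PropForm V} : Sat ν (.conj φ ψ) ↔ Sat ν φ ∧ Sat ν ψ :=
  Bool.and_eq_true_iff

lemma PropForm.eval_congr {φ : PropForm V} (h : Set.EqOn μ ν φ.vars) : φ.eval μ = φ.eval ν := by
  induction φ with
  | var x => exact h rfl
  | tru | fls => rfl
  | neg φ ih => simp only [eval, ih h]
  | conj φ ψ ihφ ihψ | disj φ ψ ihφ ihψ | impl φ ψ ihφ ihψ =>
    obtain ⟨hφ, hψ⟩ := Set.eqOn_union.1 h
    simp only [eval, ihφ hφ, ihψ hψ]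

lemma sat_congr {φ : PropForm V} (hφ : φ ∈ FormsOver S) (h : Set.EqOn μ ν S) :
    Sat μ φ ↔ Sat ν φ := by
  rw [Sat, Sat, PropForm.eval_congr (h.mono hφ)]

lemma satSet_congr (hT : T ⊆ FormsOver S) (h : Set.EqOn μ ν S) : SatSet μ T ↔ SatSet ν T :=
  forall₂_congr fun _ hφ => sat_congr (hT hφ) h

lemma SatSet.of_entailsSet {Γ : Set (PropForm V)} (hν : SatSet ν T) (h : EntailsSet T Γ) :
    SatSet ν Γ :=
  fun φ hφ => h φ hφ ν hν

lemma subset_formsOver_varsOf (T : Set (PropForm V)) : T ⊆ FormsOver (varsOf T) :=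
  fun _ hφ => Set.subset_biUnion_of_mem hφ

lemma formsOver_inter (S S' : Set V) : FormsOver (S ∩ S') = FormsOver S ∩ FormsOver S' :=
  Set.ext fun _ => Set.subset_inter_iff

lemma cn_subset_formsOver (S : Set V) (T : Set (PropForm V)) : Cn S T ⊆ FormsOver S :=
  fun _ hφ => hφ.1

lemma entailsSet_cn (S : Set V) (T : Set (PropForm V)) : EntailsSet T (Cn S T) :=
  fun _ hφ => hφ.2

end Semantics

section Compactness

variable {S : Set V} {T : Set (PropForm V)} {μ ν : V → Bool}

lemma PropForm.continuous_eval (φ : PropForm V) : Continuous fun ν : V → Bool => φ.eval ν := by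
  induction φ with
  | var x => exact continuous_apply x
  | tru | fls => exact continuous_const
  | neg φ ih => exact (continuous_of_discreteTopology (f := Bool.not)).comp ih
  | conj φ ψ ihφ ihψ =>
    exact (continuous_of_discreteTopology (f := fun b : Bool × Bool => b.1 && b.2)).comp
      (ihφ.prodMk ihψ)
  | disj φ ψ ihφ ihψ =>
    exact (continuous_of_discreteTopology (f := fun b : Bool × Bool => b.1 || b.2)).comp
      (ihφ.prodMk ihψ)
  | impl φ ψ ihφ ihψ =>
    exact (continuous_of_discreteTopology (f := fun b : Bool × Bool => !b.1 || b.2)).comp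
      (ihφ.prodMk ihψ)

lemma isClosed_setOf_sat (φ : PropForm V) : IsClosed {ν : V → Bool | Sat ν φ} :=
  isClosed_eq φ.continuous_eval continuous_const

lemma isClosed_setOf_satSet (T : Set (PropForm V)) : IsClosed {ν : V → Bool | SatSet ν T} := by
  simp only [SatSet, Set.ofPred_forall]
  exact isClosed_biInter fun φ _ => isClosed_setOf_sat φ

/-- The theory of the valuation `ν` in the language `𝓛(S)`; its models are the valuations that
agree with `ν` on `S`. -/
def theoryOver (S : Set V) (ν : V → Bool) : Set (PropForm V) :=
  {φ | φ ∈ FormsOver S ∧ Sat ν φ}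

lemma conj_mem_theoryOver {φ ψ : PropForm V} (hφ : φ ∈ theoryOver S ν)
    (hψ : ψ ∈ theoryOver S ν) : .conj φ ψ ∈ theoryOver S ν :=
  ⟨Set.union_subset hφ.1 hψ.1, sat_conj.2 ⟨hφ.2, hψ.2⟩⟩

lemma SatSet.eqOn_of_theoryOver (h : SatSet μ (theoryOver S ν)) : Set.EqOn μ ν S := by
  intro x hx
  have hvar : PropForm.var x ∈ FormsOver S := Set.singleton_subset_iff.2 hx
  rw [Bool.eq_iff_iff, ← sat_var, ← sat_var]
  refine ⟨fun hμ => ?_, fun hν => h _ ⟨hvar, hν⟩⟩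
  by_contra hν
  exact sat_neg.1 (h (.neg (.var x)) ⟨hvar, sat_neg.2 hν⟩) hμ

lemma exists_satSet_theoryOver (h : ∀ χ ∈ theoryOver S ν, ∃ μ, SatSet μ T ∧ Sat μ χ) :
    ∃ μ, SatSet μ T ∧ SatSet μ (theoryOver S ν) := by
  by_contra! hT
  let models (χ : theoryOver S ν) : Set (V → Bool) := {μ | Sat μ χ.1}
  have : Nonempty (theoryOver S ν) := ⟨.tru, Set.empty_subset S, rfl⟩
  have hdir : Directed (· ⊇ ·) models := fun χ χ' =>
    ⟨⟨_, conj_mem_theoryOver χ.2 χ'.2⟩,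
      fun _ hμ => (sat_conj.1 hμ).1, fun _ hμ => (sat_conj.1 hμ).2⟩
  have hempty : {μ | SatSet μ T} ∩ ⋂ χ, models χ = ∅ :=
    Set.eq_empty_of_forall_notMem fun μ hμ =>
      hT μ hμ.1 fun χ hχ => Set.mem_iInter.1 hμ.2 ⟨χ, hχ⟩
  have hcompact : IsCompact {μ : V → Bool | SatSet μ T} := (isClosed_setOf_satSet T).isCompact
  obtain ⟨⟨χ, hχ⟩, hdisj⟩ := hcompact.elim_directed_family_closed models
    (fun χ => isClosed_setOf_sat χ.1) hempty hdir
  obtain ⟨μ, hμ⟩ := h χ hχ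
  exact Set.eq_empty_iff_forall_notMem.1 hdisj μ hμ

lemma SatSet.exists_eqOn_of_cn (h : SatSet ν (Cn S T)) : ∃ μ, SatSet μ T ∧ Set.EqOn μ ν S := by
  have hconsistent : ∀ χ ∈ theoryOver S ν, ∃ μ, SatSet μ T ∧ Sat μ χ := by
    rintro χ ⟨hχS, hχν⟩
    by_contra! hχ
    have hneg : .neg χ ∈ Cn S T := ⟨hχS, fun μ hμ => sat_neg.2 (hχ μ hμ)⟩
    exact sat_neg.1 (h _ hneg) hχν
  obtain ⟨μ, hμT, hμν⟩ := exists_satSet_theoryOver hconsistent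
  exact ⟨μ, hμT, hμν.eqOn_of_theoryOver⟩

lemma SatSet.exists_eqOn_of_cn_varsOf_inter (h : SatSet ν (Cn (varsOf T ∩ S) T)) :
    ∃ μ, SatSet μ T ∧ Set.EqOn μ ν S := by
  classical
  obtain ⟨μ, hμT, hμν⟩ := h.exists_eqOn_of_cn
  refine ⟨(varsOf T).piecewise μ ν, ?_, fun x hx => ?_⟩
  · exact (satSet_congr (subset_formsOver_varsOf T) ((varsOf T).piecewise_eqOn μ ν)).2 hμT
  · by_cases hxT : x ∈ varsOf T
    · rw [Set.piecewise_eq_of_mem _ _ _ hxT, hμν ⟨hxT, hx⟩]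
    · rw [Set.piecewise_eq_of_notMem _ _ _ hxT]

end Compactness

section Circumscription

variable {S P Q : Set V} {T : Set (PropForm V)} {μ ν : V → Bool}

lemma setOf_mem_and_eq_true_congr (h : Set.EqOn μ ν P) :
    {x | x ∈ P ∧ μ x = true} = {x | x ∈ P ∧ ν x = true} :=
  Set.ext fun _ => and_congr_right fun hx => by rw [h hx]

lemma circLt.piecewise [∀ x, Decidable (x ∈ S)] {μ' : V → Bool} (h : circLt P Q μ' μ)
    (hP : P ⊆ S) (hμν : Set.EqOn μ ν S) : circLt P Q (S.piecewise μ' ν) ν := by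
  obtain ⟨⟨hfixed, -⟩, hlt⟩ := h
  rw [← setOf_mem_and_eq_true_congr ((S.piecewise_eqOn μ' ν).mono hP),
    setOf_mem_and_eq_true_congr (hμν.mono hP)] at hlt
  refine ⟨⟨fun x hx => ?_, hlt.subset⟩, hlt⟩
  by_cases hxS : x ∈ S
  · rw [Set.piecewise_eq_of_mem _ _ _ hxS, hfixed x hx, hμν hxS]
  · rw [Set.piecewise_eq_of_notMem _ _ _ hxS]

lemma CircModel.of_eqOn {γ : Set (PropForm V)} (hν : CircModel γ P Q ν) (hγ : γ ⊆ FormsOver S)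
    (hTγ : EntailsSet T γ) (hP : P ⊆ S) (hμ : SatSet μ T) (hμν : Set.EqOn μ ν S) :
    CircModel T P Q μ := by
  classical
  refine ⟨hμ, fun ⟨μ', hμ', hlt⟩ => hν.2 ⟨S.piecewise μ' ν, ?_, hlt.piecewise hP hμν⟩⟩
  exact (satSet_congr hγ (S.piecewise_eqOn μ' ν)).2 (hμ'.of_entailsSet hTγ)

lemma CircModel.exists_eqOn_of_cn (hP : P ⊆ S) (hν : CircModel (Cn (varsOf T ∩ S) T) P Q ν) :
    ∃ μ, CircModel T P Q μ ∧ Set.EqOn μ ν S := by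
  obtain ⟨μ, hμ, hμν⟩ := hν.1.exists_eqOn_of_cn_varsOf_inter
  have hγ : Cn (varsOf T ∩ S) T ⊆ FormsOver S := fun _ hψ => hψ.1.trans Set.inter_subset_right
  exact ⟨μ, hν.of_eqOn hγ (entailsSet_cn _ T) hP hμ hμν, hμν⟩

lemma CircEntails.cn {φ : PropForm V} (h : CircEntails T P Q φ) (hφ : φ ∈ FormsOver S)
    (hP : P ⊆ S) : CircEntails (Cn (varsOf T ∩ S) T) P Q φ := by
  intro ν hν
  obtain ⟨μ, hμ, hμν⟩ := hν.exists_eqOn_of_cn hP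
  exact (sat_congr hφ hμν).1 (h μ hμ)

end Circumscription

/-- Interpolation for Circumscription 1. -/
theorem interpolation_circ1 {V : Type*} (T : Set (PropForm V)) (P Q : Set V)
    (φ : PropForm V) (h : CircEntails T P Q φ) :
    (Cn (varsOf T ∩ (φ.vars ∪ P)) T ⊆
        FormsOver (varsOf T) ∩ FormsOver (φ.vars ∪ P) ∧
      EntailsSet T (Cn (varsOf T ∩ (φ.vars ∪ P)) T) ∧
      CircEntails (Cn (varsOf T ∩ (φ.vars ∪ P)) T) P Q φ) ∧
    ∃ γ : Set (PropForm V),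
      γ ⊆ FormsOver (varsOf T) ∩ FormsOver (φ.vars ∪ P) ∧
      EntailsSet T γ ∧ CircEntails γ P Q φ := by
  have hlang : Cn (varsOf T ∩ (φ.vars ∪ P)) T ⊆
      FormsOver (varsOf T) ∩ FormsOver (φ.vars ∪ P) :=
    (cn_subset_formsOver _ T).trans_eq (formsOver_inter _ _)
  have hentails := entailsSet_cn (varsOf T ∩ (φ.vars ∪ P)) T
  have hcirc : CircEntails (Cn (varsOf T ∩ (φ.vars ∪ P)) T) P Q φ :=
    h.cn Set.subset_union_left Set.subset_union_right
  exact ⟨⟨hlang, hentails, hcirc⟩, _, hlang, hentails, hcirc⟩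

end NMR
end

section
/- (Interpolation for Stable Models, Cautious.) Let P be an extended disjunctive logic program over a finite set of propositional atoms and let φ be a propositional formula such that P |~ φ. Then there is a formula γ ∈ 𝓛(P) ∩ 𝓛(φ) such that P |~ γ and γ ⊨ φ. -/
namespace NMR

variable {V : Type*}

/-- A literal: an atom or its classical negation. -/
inductive Lit (A : Type*) where
  | pos : A → Lit A
  | neg : A → Lit A

variable {A : Type*}

/-- The atom of a literal. -/
def Lit.atom : Lit A → A
  | .pos a => a
  | .neg a => a

/-- A rule of an extended disjunctive logic program:
`head ← posb, not negb` where all entries are literals. -/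
structure Rule (A : Type*) where
  head : Set (Lit A)
  posb : Set (Lit A)
  negb : Set (Lit A)

/-- `X` is closed under (the rules of) a positive program `P`. -/
def ClosedUnder (P : Set (Rule A)) (X : Set (Lit A)) : Prop :=
  ∀ r ∈ P, r.posb ⊆ X → (r.head ∩ X).Nonempty

/-- `X` is logically closed: consistent or contains all literals. -/
def LogClosed (X : Set (Lit A)) : Prop :=
  (¬ ∃ a : A, Lit.pos a ∈ X ∧ Lit.neg a ∈ X) ∨ X = Set.univ

/-- `X` is an answer set of a positive program `P`: a minimal set of literals
that is closed under `P` and logically closed. -/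
def AnswerSetPos (P : Set (Rule A)) (X : Set (Lit A)) : Prop :=
  ClosedUnder P X ∧ LogClosed X ∧
    ∀ Y : Set (Lit A), Y ⊆ X → ClosedUnder P Y → LogClosed Y → Y = X

/-- The reduct `P^X`. -/
def Reduct (P : Set (Rule A)) (X : Set (Lit A)) : Set (Rule A) :=
  {r' | r'.negb = ∅ ∧ ∃ r ∈ P, r'.head = r.head ∧ r'.posb = r.posb ∧ r.negb ∩ X = ∅}

/-- `X` is an answer set of `P` iff `X` is an answer set of `P^X`. -/
def IsAnswerSet (P : Set (Rule A)) (X : Set (Lit A)) : Prop :=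
  AnswerSetPos (Reduct P X) X

/-- Truth of a literal under a valuation. -/
def litSat (ν : A → Bool) : Lit A → Prop
  | .pos a => ν a = true
  | .neg a => ν a = false

/-- `X ⊨ φ`: `φ` is a propositional consequence of `X`, literals read as formulas. -/
def XEntails (X : Set (Lit A)) (φ : PropForm A) : Prop :=
  ∀ ν : A → Bool, (∀ l ∈ X, litSat ν l) → Sat ν φ

/-- Cautious entailment `P |~ φ`. -/
def LPCautious (P : Set (Rule A)) (φ : PropForm A) : Prop :=
  ∀ X : Set (Lit A), IsAnswerSet P X → XEntails X φ

/-- Brave entailment `P |~^b φ`. -/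
def LPBrave (P : Set (Rule A)) (φ : PropForm A) : Prop :=
  ∃ X : Set (Lit A), IsAnswerSet P X ∧ XEntails X φ

/-- `L(P)`: the atoms occurring in a program. -/
def atomsOf (P : Set (Rule A)) : Set A :=
  ⋃ r ∈ P, (Lit.atom '' r.head ∪ Lit.atom '' r.posb ∪ Lit.atom '' r.negb)

/-! Call a valuation a model of `P` if it satisfies every literal of some answer set of `P`, so
that `P |~ φ` says that all models of `P` satisfy `φ`. By minimality a satisfiable answer set uses
only head literals of `P`, so being a model depends only on the values of the atoms of `P`. The
interpolant is then `φ` with its atoms outside `P` universally quantified: every model of `P`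
satisfies `φ` under all reassignments of these atoms, since they do not affect its being a model. -/

namespace PropForm

theorem finite_vars (φ : PropForm V) : φ.vars.Finite := by
  induction φ with
  | var v => exact Set.finite_singleton v
  | tru | fls => exact Set.finite_empty
  | neg _ ih => exact ih
  | conj _ _ ih₁ ih₂ | disj _ _ ih₁ ih₂ | impl _ _ ih₁ ih₂ => exact ih₁.union ih₂

theorem dependsOn_eval (φ : PropForm V) : DependsOn (fun ν => φ.eval ν) φ.vars := by
  intro ν μ h
  induction φ with
  | var v => exact h v rfl
  | tru | fls => rfl
  | neg φ ih => exact congrArg not (ih h)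
  | conj φ ψ ih₁ ih₂ | disj φ ψ ih₁ ih₂ | impl φ ψ ih₁ ih₂ =>
    simp only [eval, ih₁ fun a ha => h a (Or.inl ha), ih₂ fun a ha => h a (Or.inr ha)]

/-- The conditional formula with test `a` and branches `φ`, `ψ`: one step of a Shannon expansion. -/
def ite (a : V) (φ ψ : PropForm V) : PropForm V :=
  .disj (.conj (.var a) φ) (.conj (.neg (.var a)) ψ)

theorem eval_ite (ν : V → Bool) (a : V) (φ ψ : PropForm V) :
    (ite a φ ψ).eval ν = bif ν a then φ.eval ν else ψ.eval ν := by
  cases h : ν a <;> simp [ite, eval, h]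

theorem vars_ite (a : V) (φ ψ : PropForm V) :
    (ite a φ ψ).vars = insert a (φ.vars ∪ ψ.vars) := by
  simp only [ite, vars, ← Set.insert_union_distrib, Set.singleton_union]

end PropForm

theorem exists_eval_eq_of_dependsOn {s : Set V} (hs : s.Finite) {f : (V → Bool) → Bool}
    (hf : DependsOn f s) : ∃ γ : PropForm V, γ.vars ⊆ s ∧ ∀ ν, γ.eval ν = f ν := by
  classical
  lift s to Finset V using hs
  induction s using Finset.induction_on generalizing f with
  | empty =>
    rw [Finset.coe_empty] at hf
    have hconst : ∀ ν, f (fun _ => false) = f ν := hf.empty _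
    cases h : f fun _ => false with
    | true => exact ⟨.tru, Set.empty_subset _, fun ν => h.symm.trans (hconst ν)⟩
    | false => exact ⟨.fls, Set.empty_subset _, fun ν => h.symm.trans (hconst ν)⟩
  | insert a s ha ih =>
    have hupdate : ∀ b, DependsOn (fun ν => f (Function.update ν a b)) s := fun b => by
      simpa only [Finset.erase_insert ha] using hf.update a b
    obtain ⟨γ₁, hvars₁, heval₁⟩ := ih (hupdate true)
    obtain ⟨γ₀, hvars₀, heval₀⟩ := ih (hupdate false)
    refine ⟨.ite a γ₁ γ₀, ?_, fun ν => ?_⟩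
    · rw [PropForm.vars_ite, Finset.coe_insert]
      exact Set.insert_subset_insert (Set.union_subset hvars₁ hvars₀)
    · calc (PropForm.ite a γ₁ γ₀).eval ν
          = f (Function.update ν a (ν a)) := by
            rw [PropForm.eval_ite, heval₁, heval₀]
            cases ν a <;> rfl
        _ = f ν := by rw [Function.update_eq_self]

open Classical in
theorem dependsOn_forall_sat_piecewise (s : Set V) (φ : PropForm V) :
    DependsOn (fun ν => ∀ μ, Sat (s.piecewise ν μ) φ) (s ∩ φ.vars) := by
  intro ν ν' h
  refine forall_congr fun μ => congrArg (· = true) (φ.dependsOn_eval fun a ha => ?_)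
  by_cases has : a ∈ s
  · simpa only [Set.piecewise_eq_of_mem _ _ _ has] using h a ⟨has, ha⟩
  · simp only [Set.piecewise_eq_of_notMem _ _ _ has]

theorem exists_interpolant_of_dependsOn {M : (V → Bool) → Prop} {s : Set V} (hM : DependsOn M s)
    {φ : PropForm V} (hφ : ∀ ν, M ν → Sat ν φ) :
    ∃ γ : PropForm V, γ.vars ⊆ s ∩ φ.vars ∧ (∀ ν, M ν → Sat ν γ) ∧ Entails {γ} φ := by
  classical
  obtain ⟨γ, hvars, heval⟩ := exists_eval_eq_of_dependsOn (φ.finite_vars.inter_of_right s)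
    (f := fun ν => decide (∀ μ, Sat (s.piecewise ν μ) φ))
    fun ν ν' h => decide_eq_decide.2 (dependsOn_forall_sat_piecewise s φ h).to_iff
  have hsat : ∀ ν, Sat ν γ ↔ ∀ μ, Sat (s.piecewise ν μ) φ := fun ν => by
    rw [Sat, heval, decide_eq_true_iff]
  refine ⟨γ, hvars, fun ν hν => (hsat ν).2 fun μ => hφ _ ?_, fun ν hν => ?_⟩
  · have hpiecewise : M (s.piecewise ν μ) = M ν :=
      hM fun a ha => Set.piecewise_eq_of_mem _ _ _ ha
    exact hpiecewise.mpr hν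
  · simpa only [Set.piecewise_same] using (hsat ν).1 (hν γ rfl) ν

/-- Consistency of a set of literals, the first alternative in `LogClosed`. -/
def IsConsistent (X : Set (Lit A)) : Prop :=
  ¬ ∃ a : A, Lit.pos a ∈ X ∧ Lit.neg a ∈ X

theorem IsConsistent.mono {X Y : Set (Lit A)} (hY : IsConsistent Y) (hXY : X ⊆ Y) :
    IsConsistent X :=
  fun ⟨a, hpos, hneg⟩ => hY ⟨a, hXY hpos, hXY hneg⟩

theorem isConsistent_of_litSat {X : Set (Lit A)} {ν : A → Bool} (hν : ∀ l ∈ X, litSat ν l) :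
    IsConsistent X :=
  fun ⟨_, hpos, hneg⟩ => Bool.false_ne_true ((hν _ hneg).symm.trans (hν _ hpos))

theorem ClosedUnder.inter_of_head_subset {P : Set (Rule A)} {X L : Set (Lit A)}
    (hX : ClosedUnder P X) (hL : ∀ r ∈ P, r.head ⊆ L) : ClosedUnder P (X ∩ L) := by
  intro r hr hbody
  obtain ⟨l, hhead, hlX⟩ := hX r hr (hbody.trans Set.inter_subset_left)
  exact ⟨l, hhead, hlX, hL r hr hhead⟩

theorem AnswerSetPos.subset_of_head_subset {P : Set (Rule A)} {X L : Set (Lit A)}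
    (hX : AnswerSetPos P X) (hcons : IsConsistent X) (hL : ∀ r ∈ P, r.head ⊆ L) : X ⊆ L := by
  obtain ⟨hclosed, -, hmin⟩ := hX
  exact Set.inter_eq_left.1 <| hmin (X ∩ L) Set.inter_subset_left
    (hclosed.inter_of_head_subset hL) (Or.inl (hcons.mono Set.inter_subset_left))

theorem IsAnswerSet.atom_mem_atomsOf {P : Set (Rule A)} {X : Set (Lit A)} (hX : IsAnswerSet P X)
    (hcons : IsConsistent X) {l : Lit A} (hl : l ∈ X) : l.atom ∈ atomsOf P := by
  suffices X ⊆ Lit.atom ⁻¹' atomsOf P from this hl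
  refine AnswerSetPos.subset_of_head_subset hX hcons ?_
  rintro r' ⟨-, r, hr, hhead, -⟩ l hl
  exact Set.mem_biUnion hr (Or.inl (Or.inl ⟨l, hhead ▸ hl, rfl⟩))

/-- `ν` is a model of some answer set of `P`. Such valuations are the semantic counterpart of `P`
for cautious entailment; inconsistent answer sets contribute none. -/
def IsAnswerSetModel (P : Set (Rule A)) (ν : A → Bool) : Prop :=
  ∃ X, IsAnswerSet P X ∧ ∀ l ∈ X, litSat ν l

theorem lpCautious_iff {P : Set (Rule A)} {φ : PropForm A} :
    LPCautious P φ ↔ ∀ ν, IsAnswerSetModel P ν → Sat ν φ :=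
  ⟨fun h ν ⟨X, hX, hν⟩ => h X hX ν hν, fun h X hX ν hν => h ν ⟨X, hX, hν⟩⟩

theorem litSat_congr {ν μ : A → Bool} {l : Lit A} (h : ν l.atom = μ l.atom) :
    litSat ν l ↔ litSat μ l := by
  cases l <;> exact Eq.congr_left h

theorem IsAnswerSetModel.congr {P : Set (Rule A)} {ν μ : A → Bool} (hν : IsAnswerSetModel P ν)
    (h : Set.EqOn ν μ (atomsOf P)) : IsAnswerSetModel P μ := by
  obtain ⟨X, hX, hsat⟩ := hν
  have hcons : IsConsistent X := isConsistent_of_litSat hsat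
  exact ⟨X, hX, fun l hl => (litSat_congr (h (hX.atom_mem_atomsOf hcons hl))).1 (hsat l hl)⟩

theorem dependsOn_isAnswerSetModel (P : Set (Rule A)) :
    DependsOn (IsAnswerSetModel P) (atomsOf P) :=
  fun _ _ h => propext ⟨fun hν => hν.congr h, fun hμ => hμ.congr (Set.EqOn.symm h)⟩

theorem interpolation_stable_cautious_general {A : Type*} (P : Set (Rule A)) (φ : PropForm A)
    (h : LPCautious P φ) :
    ∃ γ : PropForm A, γ.vars ⊆ atomsOf P ∩ φ.vars ∧ LPCautious P γ ∧ Entails {γ} φ := by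
  simp only [lpCautious_iff] at h ⊢
  exact exists_interpolant_of_dependsOn (dependsOn_isAnswerSetModel P) h

/-- Interpolation for Stable Models, Cautious. -/
theorem interpolation_stable_cautious {A : Type*} [Finite A]
    (P : Set (Rule A)) (φ : PropForm A) (h : LPCautious P φ) :
    ∃ γ : PropForm A,
      γ.vars ⊆ atomsOf P ∩ φ.vars ∧
      LPCautious P γ ∧
      Entails {γ} φ :=
  interpolation_stable_cautious_general P φ h

end NMR
end
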